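/- arXiv:2106.11206 — 2 statements merged into one kernel-verified Lean document; each statement's English description precedes it below -/
import Mathlib

section
/- For every k ∈ {1,…,n} there exist J, J′ ∈ S_{A_n} with m_J ≠ m_{J′} such that f_k(m_J) = f_k(m_{J′}) and f_k(m_J) ≤ f_k(m_{J″}) for all J″ ∈ S_{A_n}. (This is the combinatorial content of: the vector (k, 1−k) lies in the intersection of the two cones σ_{m_J} and σ_{m_{J′}} determined by the order function of the ideal I_n, so the ray generated by (k, 1−k) appears in the fan Σ(I_n) describing the normalization of the Nash blow-up of order n of the toric surface 𝒜_n.) -/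
open Finset

/-- `Λ_{2,n}`: pairs `α ∈ ℕ²` with `1 ≤ α₁ + α₂ ≤ n`. -/
def Lam2 (n : ℕ) : Finset (ℕ × ℕ) :=
  ((range (n+1)) ×ˢ (range (n+1))).filter (fun α => 1 ≤ α.1 + α.2 ∧ α.1 + α.2 ≤ n)

/-- `v̄ ∈ ℂ^{Λ_{2,n}}`, with `α`-coordinate `C(v₁,α₁)·C(v₂,α₂)`. -/
noncomputable def vbar (n : ℕ) (v : ℕ × ℕ) : (Lam2 n) → ℂ :=
  fun α => ((v.1.choose α.1.1 * v.2.choose α.1.2 : ℕ) : ℂ)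

/-- `Λ_{3,n}`: triples `β ∈ ℕ³` with `1 ≤ β₁ + β₂ + β₃ ≤ n`. -/
def Lam3 (n : ℕ) : Finset (ℕ × ℕ × ℕ) :=
  ((range (n+1)) ×ˢ (range (n+1)) ×ˢ (range (n+1))).filter
    (fun β => 1 ≤ β.1 + β.2.1 + β.2.2 ∧ β.1 + β.2.1 + β.2.2 ≤ n)

/-- The linear map `A_n : ℕ³ → ℕ²` with matrix rows `(1,1,n)` and `(0,1,n+1)`. -/
def Amap (n : ℕ) (β : ℕ × ℕ × ℕ) : ℕ × ℕ :=
  (β.1 + β.2.1 + n * β.2.2, β.2.1 + (n+1) * β.2.2)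

/-- `c_β = Σ_{γ ≤ β} (−1)^{|β−γ|} C(β,γ) (A_nγ)‾`. -/
noncomputable def cvec (n : ℕ) (β : ℕ × ℕ × ℕ) : (Lam2 n) → ℂ :=
  ∑ γ ∈ (range (β.1+1)) ×ˢ (range (β.2.1+1)) ×ˢ (range (β.2.2+1)),
    (((-1 : ℂ) ^ ((β.1 + β.2.1 + β.2.2) - (γ.1 + γ.2.1 + γ.2.2))) *
      ((β.1.choose γ.1 * β.2.1.choose γ.2.1 * β.2.2.choose γ.2.2 : ℕ) : ℂ)) •
      vbar n (Amap n γ)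

/-- `J ∈ S_{A_n}`: `J ⊆ Λ_{3,n}`, `|J| = λ_{2,n}`, `det L^c_J ≠ 0`. -/
def memSA (n : ℕ) (J : Finset (ℕ × ℕ × ℕ)) : Prop :=
  J ⊆ Lam3 n ∧ J.card = (Lam2 n).card ∧
    ∀ e : (Lam2 n) ≃ J,
      (Matrix.of fun i j : (Lam2 n) => cvec n (e i).1 j).det ≠ 0

/-- `m_J = Σ_{β ∈ J} A_nβ`. -/
def mJ (n : ℕ) (J : Finset (ℕ × ℕ × ℕ)) : ℕ × ℕ := ∑ β ∈ J, Amap n β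

/-- `f_k(v) = k·v₁ + (1−k)·v₂`. -/
def fk (k : ℕ) (v : ℕ × ℕ) : ℤ := (k : ℤ) * v.1 + (1 - (k : ℤ)) * v.2

/-- Data of a sequence `η = (z, d₀, d₁, …, d_r)`. -/
structure OmegaData where
  r : ℕ
  z : Bool
  d : ℕ → ℕ

/-- `η ∈ Ω`: `d₀ = 0`, `d_i ≥ 1` for `1 ≤ i ≤ r` (and `d_i = 0` beyond `r`),
and `d₀ + ⋯ + d_r = n`. -/
def OmegaData.IsOmega (n : ℕ) (η : OmegaData) : Prop :=
  η.d 0 = 0 ∧ (∀ i, 1 ≤ i → i ≤ η.r → 1 ≤ η.d i) ∧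
  (∀ i, η.r < i → η.d i = 0) ∧
  (∑ i ∈ range (η.r + 1), η.d i) = n

/-- The unique `t` with `Σ_{i=0}^{t−1} d_i < j ≤ Σ_{i=0}^{t} d_i`. -/
noncomputable def tIdx (η : OmegaData) (j : ℕ) : ℕ :=
  sInf {t | j ≤ ∑ i ∈ range (t+1), η.d i}

/-- The vector `v_{j,η} ∈ ℕ²`. -/
noncomputable def vvec (η : OmegaData) (j : ℕ) : ℕ × ℕ :=
  let t := tIdx η j
  let c := j - ∑ i ∈ range t, η.d i
  let a := (∑ i ∈ range t, if (Odd i ↔ Odd t) then η.d i else 0) + c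
  if (η.z = true) ↔ Odd t then (a, 0) else (0, a)

/-- `T_{j,η}` for `1 ≤ j ≤ n`, and `T_{0,η} = {(1,1),…,(n,n)}`. -/
noncomputable def Tj (n : ℕ) (η : OmegaData) (j : ℕ) : Finset (ℕ × ℕ) :=
  if j = 0 then (range n).image (fun q => (q+1, q+1))
  else (range (n - j + 1)).image (fun p => vvec η j + (p, p))

/-- `T_η = ⋃_{j=0}^{n} T_{j,η}`. -/
noncomputable def Tset (n : ℕ) (η : OmegaData) : Finset (ℕ × ℕ) :=
  (range (n+1)).biUnion (fun j => Tj n η j)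

/-- `r_{i,η} = n·π₂(v_{i,η})`. -/
noncomputable def rshift (n : ℕ) (η : OmegaData) (i : ℕ) : ℕ := n * (vvec η i).2

/-- `T'_η = T_{0,η} ∪ ⋃_{i=1}^{n} (T_{i,η} + r_{i,η})`. -/
noncomputable def Tset' (n : ℕ) (η : OmegaData) : Finset (ℕ × ℕ) :=
  Tj n η 0 ∪ (Finset.Icc 1 n).biUnion
    (fun i => (Tj n η i).image (fun v => v + (rshift n η i, rshift n η i)))

/-- `J_η`: the (unique) subset of `Λ_{3,n}` with `A_n(J_η) = T'_η`. -/
noncomputable def Jset (n : ℕ) (η : OmegaData) : Finset (ℕ × ℕ × ℕ) :=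
  (Lam3 n).filter (fun β => Amap n β ∈ Tset' n η)

/-- `z_k = 1` iff `f_k((1,0)) ≤ f_k((n,n+1))`. -/
def zk (n k : ℕ) : Bool := decide (fk k (1, 0) ≤ fk k (n, n+1))

/-- `t_l` in the recursive definition of `η_k`, where `O`, `E` are the odd- and
even-indexed partial sums `Σ_{j<l, j odd} d_{k,j}` and `Σ_{j<l, j even} d_{k,j}`. -/
noncomputable def tval (n k : ℕ) (l O E : ℕ) : ℕ :=
  let w := (if Odd l then E else O) + 1
  if ((zk n k = true) ↔ Odd l) then
    sSup {m : ℕ | (m : ℤ) * fk k (1, 0) ≤ fk k (w * n, w * (n+1))}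
  else
    sSup {m : ℕ | (m : ℤ) * fk k (n, n+1) ≤ fk k (w, 0)}

/-- The pair `(Σ_{j≤l, j odd} d_{k,j}, Σ_{j≤l, j even} d_{k,j})` of the recursion
defining `η_k`. -/
noncomputable def oeSums (n k : ℕ) : ℕ → ℕ × ℕ
  | 0 => (0, 0)
  | l + 1 =>
    let p := oeSums n k l
    let O := p.1
    let E := p.2
    let S := O + E
    let dnext := if S < n then
        min (n - S) (tval n k (l+1) O E - (if Odd (l+1) then O else E))
      else 0
    if Odd (l+1) then (O + dnext, E) else (O, E + dnext)

/-- `d_{k,l}`. -/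
noncomputable def dk (n k : ℕ) : ℕ → ℕ
  | 0 => 0
  | l + 1 =>
    let p := oeSums n k l
    let O := p.1
    let E := p.2
    let S := O + E
    if S < n then
      min (n - S) (tval n k (l+1) O E - (if Odd (l+1) then O else E))
    else 0

/-- `η_k = (z_k, d_{k,0}, …, d_{k,r})`, where `r` is the first index with
`Σ_{j=0}^{r} d_{k,j} = n`. -/
noncomputable def etak (n k : ℕ) : OmegaData :=
  { r := sInf {r | ∑ j ∈ range (r+1), dk n k j = n},
    z := zk n k,
    d := dk n k }

/-!
In the ring of `n`-jets of the plane at `(1, 1)` put `a = x - 1`, `b = x * y - 1` and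
`c = x ^ n * y ^ (n + 1) - 1`. The vector `c_β` lists the coefficients of the jet of
`a ^ β₁ * b ^ β₂ * c ^ β₃`, so the elements of `S_{A_n}` are the sets of such monomials which form
a basis of the jets modulo constants. Give `a`, `b`, `c` the weights `k`, `1`, `m = n + 1 - k`;
then `f_k (m_J)` is the total weight of `J`.

Enumerate `1` and the positive powers of `a` and of `c` as `u_0, u_1, …` by increasing weight. The
relation `(1 + a) * (1 + c) = (1 + b) ^ (n + 1)` writes every monomial as a combination of elements
`b ^ p * u_j` which are not heavier. If `j + p > n`, it also writes `b ^ p * u_j` as a combination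
of elements `b ^ q * u_i` with `i < j` and `i + q ≤ n`, which are not heavier either. Hence the
`b ^ p * u_j` with `1 ≤ j + p ≤ n` form a basis, and every monomial lies in the span of those basis
elements which are not heavier than it. Expanding the determinant of a change of basis shows that
such a basis has minimal total weight.

The monomials `a ^ m` and `c ^ k` have the same weight and compete for the place `u_n`. The two
ways of breaking this tie give two minimal elements of `S_{A_n}` with different `m_J`.
-/

theorem one_add_pow {R : Type*} [CommSemiring R] (x : R) (r : ℕ) :
    (1 + x) ^ r = ∑ t ∈ range (r + 1), r.choose t • x ^ t := by
  rw [add_comm, add_pow]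
  simp [mul_comm]

theorem sub_one_pow {R : Type*} [CommRing R] (x : R) (r : ℕ) :
    (x - 1) ^ r = ∑ t ∈ range (r + 1), ((-1) ^ (r - t) * (r.choose t : R)) * x ^ t := by
  rw [sub_eq_add_neg, add_pow]
  exact sum_congr rfl fun t _ => by ring

section Laurent

variable {R A : Type*} [CommRing R] [CommRing A] [Algebra R A]

theorem mul_add_algebraMap_pow_mem {M : Submodule R A} {v y : A} {s : ℕ} (r : R)
    (h : ∀ t ≤ s, v * y ^ t ∈ M) : v * (y + algebraMap R A r) ^ s ∈ M := by
  rw [add_pow, mul_sum]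
  refine sum_mem fun t ht => ?_
  have hterm : v * (y ^ t * algebraMap R A r ^ (s - t) * (s.choose t : A)) =
      (r ^ (s - t) * (s.choose t : R)) • (v * y ^ t) := by
    rw [Algebra.smul_def, map_mul, map_pow, map_natCast]
    ring
  rw [hterm]
  exact M.smul_mem _ (h t (mem_range_succ_iff.mp ht))

variable {M : Submodule R A} {a c : A} {ε : R} {I L : ℕ}

/- With `x = 1 + a` and `y = 1 + c`, the module spanned by the powers of `a` and `c` contains
`x ^ i` for `i ≤ I` and `y ^ l` for `l ≤ L`; since `y = ε * x⁻¹`, up to units these are the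
Laurent monomials `x ^ (-L), …, x ^ I`. -/
theorem one_add_pow_mul_pow_mem (hac : (1 + a) * (1 + c) = algebraMap R A ε)
    (ha : ∀ i ≤ I, a ^ i ∈ M) (hc : ∀ l ≤ L, c ^ l ∈ M) {s : ℕ} (hs : s ≤ I + L) :
    (1 + c) ^ L * a ^ s ∈ M := by
  have hx : ∀ i ≤ I, (1 + a) ^ i ∈ M := fun i hi => by
    simpa [add_comm] using mul_add_algebraMap_pow_mem (M := M) (v := 1) (y := a) (s := i) 1
      fun t ht => by simpa using ha t (ht.trans hi)
  have hy : ∀ l ≤ L, (1 + c) ^ l ∈ M := fun l hl => by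
    simpa [add_comm] using mul_add_algebraMap_pow_mem (M := M) (v := 1) (y := c) (s := l) 1
      fun t ht => by simpa using hc t (ht.trans hl)
  have hLaurent : ∀ t ≤ s, (1 + c) ^ L * (1 + a) ^ t ∈ M := by
    intro t ht
    rcases le_total t L with htL | hLt
    · obtain ⟨l, rfl⟩ := Nat.exists_eq_add_of_le htL
      have hcancel : (1 + c) ^ (t + l) * (1 + a) ^ t = ε ^ t • (1 + c) ^ l := by
        rw [Algebra.smul_def, map_pow, ← hac, mul_pow]
        ring
      exact hcancel ▸ M.smul_mem _ (hy l (by omega))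
    · obtain ⟨i, rfl⟩ := Nat.exists_eq_add_of_le hLt
      have hcancel : (1 + c) ^ L * (1 + a) ^ (L + i) = ε ^ L • (1 + a) ^ i := by
        rw [Algebra.smul_def, map_pow, ← hac, mul_pow]
        ring
      exact hcancel ▸ M.smul_mem _ (hx i (by omega))
  simpa using mul_add_algebraMap_pow_mem (-1) hLaurent

theorem smul_pow_succ_mem (hac : (1 + a) * (1 + c) = algebraMap R A ε) (hε : IsUnit ε)
    (ha : ∀ i ≤ I, a ^ i ∈ M) (hc : ∀ l ≤ L, c ^ l ∈ M) {r : R}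
    (hr : r • a ^ (I + L + 1) = 0) : r • a ^ (I + 1) ∈ M := by
  have hterm : ∀ t ≤ L, r • ((1 + c) ^ L * a ^ (I + 1)) * a ^ t ∈ M := by
    intro t ht
    have hshift : r • ((1 + c) ^ L * a ^ (I + 1)) * a ^ t =
        r • ((1 + c) ^ L * a ^ (I + 1 + t)) := by
      rw [smul_mul_assoc, mul_assoc, ← pow_add]
    rw [hshift]
    rcases ht.lt_or_eq with hlt | rfl
    · exact M.smul_mem _ (one_add_pow_mul_pow_mem hac ha hc (by omega))
    · rw [add_right_comm, ← mul_smul_comm, hr, mul_zero]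
      exact M.zero_mem
  have hε_smul : ε ^ L • r • a ^ (I + 1) ∈ M := by
    convert mul_add_algebraMap_pow_mem 1 hterm using 1
    rw [map_one, smul_mul_assoc, smul_comm, Algebra.smul_def (ε ^ L), map_pow, ← hac, mul_pow]
    simp only [Algebra.smul_def]
    ring
  exact (M.smul_mem_iff_of_isUnit (hε.pow L)).mp hε_smul

end Laurent

theorem restrictScalars_span_adjoin_singleton {K A : Type*} [CommRing K] [CommRing A] [Algebra K A]
    (b : A) (t : Set A) :
    (Submodule.span (Algebra.adjoin K {b}) t).restrictScalars K =
      Submodule.span K {x | ∃ q : ℕ, ∃ u ∈ t, b ^ q * u = x} := by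
  set b' : Algebra.adjoin K {b} := ⟨b, Algebra.self_mem_adjoin_singleton K b⟩
  have htop : Submodule.span K (Submonoid.powers b' : Set (Algebra.adjoin K {b})) = ⊤ := by
    have hpre : ((↑) : Algebra.adjoin K {b} → A) ⁻¹' {b} = {b'} := by
      ext x
      simp [b', Subtype.ext_iff]
    rw [Submonoid.powers_eq_closure, ← Algebra.adjoin_eq_span, ← hpre,
      Algebra.adjoin_adjoin_coe_preimage, Algebra.top_toSubmodule]
  rw [← Submodule.span_smul_of_span_eq_top htop]
  congr 1
  ext x
  simp only [Set.mem_smul, SetLike.mem_coe, Submonoid.mem_powers_iff, SubmonoidClass.mk_pow,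
    Subalgebra.smul_def, smul_eq_mul, exists_exists_eq_and, Set.mem_ofPred_eq, b']

theorem mem_of_mul_mem_of_isNilpotent_sub_one {R A : Type*} [CommRing R] [CommRing A] [Algebra R A]
    {S : Subalgebra R A} {x y : A} (hx : x ∈ S) (hnil : IsNilpotent (x - 1)) (hxy : x * y ∈ S) :
    y ∈ S := by
  obtain ⟨r, hr⟩ := hnil
  have hunit : IsUnit (⟨x, hx⟩ : S) := by
    have hnil' : IsNilpotent ((⟨x, hx⟩ : S) - 1) := ⟨r, Subtype.ext hr⟩
    simpa using hnil'.isUnit_one_add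
  obtain ⟨u, hu⟩ := hunit
  have huy : (u⁻¹ : Sˣ) • (x * y) = y := by
    rw [inv_smul_eq_iff, Units.smul_def, hu]
    rfl
  rw [← huy]
  exact S.mul_mem (u⁻¹ : Sˣ).val.2 hxy

theorem adjoin_le_adjoin_sub_one {R A : Type*} [CommRing R] [CommRing A] [Algebra R A] {x y : A}
    (hnil : IsNilpotent (x - 1)) :
    Algebra.adjoin R {x, y} ≤ Algebra.adjoin R {x - 1, x * y - 1} := by
  set S := Algebra.adjoin R {x - 1, x * y - 1}
  have hx : x ∈ S := by
    have hsub : x - 1 ∈ S := Algebra.subset_adjoin (Set.mem_insert _ _)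
    simpa using add_mem hsub (one_mem S)
  have hxy : x * y ∈ S := by
    have hsub : x * y - 1 ∈ S := Algebra.subset_adjoin (Set.mem_insert_of_mem _ rfl)
    simpa using add_mem hsub (one_mem S)
  rw [Algebra.adjoin_le_iff, Set.pair_subset_iff]
  exact ⟨hx, mem_of_mul_mem_of_isNilpotent_sub_one hx hnil hxy⟩

section BasisWeight

variable {K V ι ι' : Type*} [CommRing K] [Nontrivial K] [AddCommGroup V] [Module K V]

theorem exists_equiv_repr_ne_zero [Finite ι] (B : Module.Basis ι K V) (B' : Module.Basis ι' K V) :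
    ∃ e : ι ≃ ι', ∀ i, B.repr (B' (e i)) i ≠ 0 := by
  classical
  cases nonempty_fintype ι
  let e := B.indexEquiv B'
  have hdet : (B.toMatrix (B' ∘ e)).det ≠ 0 := by
    simpa [Module.Basis.det_apply] using (B.isUnit_det (B'.reindex e.symm)).ne_zero
  rw [Matrix.det_apply'] at hdet
  obtain ⟨σ, -, hσ⟩ := exists_ne_zero_of_sum_ne_zero hdet
  have hentry : ∀ i, B.toMatrix (B' ∘ e) (σ i) i ≠ 0 := fun i hi =>
    right_ne_zero_of_mul hσ (prod_eq_zero (mem_univ i) hi)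
  refine ⟨σ.symm.trans e, fun i => ?_⟩
  simpa [Module.Basis.toMatrix_apply] using hentry (σ.symm i)

theorem sum_le_sum_of_mem_span_basis [Fintype ι] [Fintype ι'] {N : Type*} [AddCommMonoid N]
    [PartialOrder N] [IsOrderedAddMonoid N] (B : Module.Basis ι K V) (B' : Module.Basis ι' K V)
    {w : ι → N} {w' : ι' → N} (h : ∀ i', B' i' ∈ Submodule.span K (B '' {i | w i ≤ w' i'})) :
    ∑ i, w i ≤ ∑ i', w' i' := by
  obtain ⟨e, he⟩ := exists_equiv_repr_ne_zero B B'
  rw [← e.sum_comp]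
  exact sum_le_sum fun i _ =>
    B.mem_span_image.mp (h (e i)) (Finsupp.mem_support_iff.mpr (he i))

end BasisWeight

section LatticePath

/-- The monotone lattice path from the origin which leaves `s` to the right if `step s` holds
and upwards otherwise. Its position after `j` steps says how many positive powers of `a` and of
`c` are among the first `j` monomials selected. -/
def latticePath (step : ℕ × ℕ → Bool) : ℕ → ℕ × ℕ
  | 0 => (0, 0)
  | j + 1 =>
    let s := latticePath step j
    if step s then (s.1 + 1, s.2) else (s.1, s.2 + 1)

/-- The exponent of the `j`-th monomial `a ^ i * c ^ l` selected by a lattice path: a step to the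
right selects the next power of `a`, a step upwards the next power of `c`. -/
def axisExponent (step : ℕ × ℕ → Bool) : ℕ → ℕ × ℕ
  | 0 => (0, 0)
  | j + 1 =>
    let s := latticePath step j
    if step s then (s.1 + 1, 0) else (0, s.2 + 1)

variable {step : ℕ × ℕ → Bool}

theorem latticePath_fst_add_snd (step : ℕ × ℕ → Bool) (j : ℕ) :
    (latticePath step j).1 + (latticePath step j).2 = j := by
  induction j with
  | zero => rfl
  | succ j ih => simp only [latticePath]; split_ifs <;> dsimp only <;> omega

theorem latticePath_monotone (step : ℕ × ℕ → Bool) : Monotone (latticePath step) :=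
  monotone_nat_of_le_succ fun j => by
    simp only [latticePath]; split_ifs <;> simp [Prod.le_def]

theorem axisExponent_le_latticePath (step : ℕ × ℕ → Bool) (j : ℕ) :
    axisExponent step j ≤ latticePath step j := by
  cases j with
  | zero => rfl
  | succ j => simp only [axisExponent, latticePath]; split_ifs <;> simp [Prod.le_def]

theorem not_axisExponent_succ_le_latticePath (step : ℕ × ℕ → Bool) (j : ℕ) :
    ¬ axisExponent step (j + 1) ≤ latticePath step j := by
  simp only [axisExponent]; split_ifs <;> simp [Prod.le_def]

theorem axisExponent_injective (step : ℕ × ℕ → Bool) : Function.Injective (axisExponent step) :=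
  Function.Injective.of_lt_imp_ne fun j j' hlt heq => by
    obtain ⟨i, rfl⟩ := Nat.exists_eq_add_one_of_ne_zero (Nat.ne_zero_of_lt hlt)
    exact not_axisExponent_succ_le_latticePath step i <| heq ▸
      (axisExponent_le_latticePath step j).trans
        (latticePath_monotone step (Nat.lt_succ_iff.mp hlt))

theorem exists_le_axisExponent_eq_fst {i j : ℕ} (h : i ≤ (latticePath step j).1) :
    ∃ j' ≤ j, axisExponent step j' = (i, 0) := by
  induction j with
  | zero => exact ⟨0, le_rfl, by simpa [latticePath, axisExponent, eq_comm] using h⟩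
  | succ j ih =>
    by_cases hi : i ≤ (latticePath step j).1
    · obtain ⟨j', hj', he⟩ := ih hi
      exact ⟨j', hj'.trans j.le_succ, he⟩
    · refine ⟨j + 1, le_rfl, ?_⟩
      simp only [latticePath, axisExponent] at h ⊢
      split_ifs at h ⊢ <;> dsimp only at h <;> grind

theorem exists_le_axisExponent_eq_snd {l j : ℕ} (h : l ≤ (latticePath step j).2) :
    ∃ j' ≤ j, axisExponent step j' = (0, l) := by
  induction j with
  | zero => exact ⟨0, le_rfl, by simpa [latticePath, axisExponent, eq_comm] using h⟩
  | succ j ih =>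
    by_cases hl : l ≤ (latticePath step j).2
    · obtain ⟨j', hj', he⟩ := ih hl
      exact ⟨j', hj'.trans j.le_succ, he⟩
    · refine ⟨j + 1, le_rfl, ?_⟩
      simp only [latticePath, axisExponent] at h ⊢
      split_ifs at h ⊢ <;> dsimp only at h <;> grind

end LatticePath

section IsBalanced

/-- A lattice point is balanced when neither of the weights `k * s.1` and `m * s.2` exceeds the
other one by more than a single step. -/
structure IsBalanced (k m : ℕ) (s : ℕ × ℕ) : Prop where
  fst_le : k * s.1 ≤ m * (s.2 + 1)
  snd_le : m * s.2 ≤ k * (s.1 + 1)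

variable {k m n p q : ℕ} {s s' : ℕ × ℕ}

theorem IsBalanced.swap (h : IsBalanced k m s) : IsBalanced m k s.swap :=
  ⟨h.snd_le, h.fst_le⟩

theorem IsBalanced.max_add_le_of_one (h : IsBalanced 1 n s) (hq : s.1 + s.2 + q ≤ n) :
    max (1 * s.1) (n * s.2) + q ≤ n := by
  obtain ⟨i, l⟩ := s
  have hl : n * l ≤ 1 * (i + 1) := h.snd_le
  match l with
  | 0 => simpa using hq
  | 1 => grind
  | l + 2 => nlinarith

theorem le_max_add_of_one (hp : n < s.1 + s.2 + p) : n ≤ max (1 * s.1) (n * s.2) + p := by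
  obtain ⟨i, l⟩ := s
  match l with
  | 0 => grind
  | l + 1 => exact le_add_right (le_max_of_le_right (Nat.le_mul_of_pos_right n l.succ_pos))

/- The weight at `s` dominates both `k * s'.1 + 2 * (s.1 - s'.1)` and
`k * s'.1 + 2 * (s.2 - s'.2 - 1)`, hence their mean. -/
theorem IsBalanced.fst_add_le (h : IsBalanced k m s') (hk : 2 ≤ k) (hm : 2 ≤ m) (hle : s' ≤ s)
    (hlt : s'.1 + s'.2 < s.1 + s.2) (hp : n < s.1 + s.2 + p) (hq : s'.1 + s'.2 + q ≤ n) :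
    k * s'.1 + q ≤ max (k * s.1) (m * s.2) + p := by
  obtain ⟨X, hX⟩ := Nat.exists_eq_add_of_le hle.1
  obtain ⟨Y, hY⟩ := Nat.exists_eq_add_of_le hle.2
  have hright : k * s'.1 + 2 * X ≤ max (k * s.1) (m * s.2) :=
    le_max_of_le_left (by rw [hX]; nlinarith)
  rcases Y with _ | Y
  · omega
  · have hup : k * s'.1 + 2 * Y ≤ max (k * s.1) (m * s.2) :=
      le_max_of_le_right (by rw [hY]; nlinarith [h.fst_le])
    omega

theorem IsBalanced.max_add_le (h : IsBalanced k m s') (hk : 1 ≤ k) (hm : 1 ≤ m)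
    (hkm : k + m = n + 1) (hle : s' ≤ s) (hlt : s'.1 + s'.2 < s.1 + s.2) (hp : n < s.1 + s.2 + p)
    (hq : s'.1 + s'.2 + q ≤ n) :
    max (k * s'.1) (m * s'.2) + q ≤ max (k * s.1) (m * s.2) + p := by
  have hswap : s'.2 + s'.1 < s.2 + s.1 ∧ n < s.2 + s.1 + p ∧ s'.2 + s'.1 + q ≤ n := by omega
  obtain ⟨hlt', hp', hq'⟩ := hswap
  rcases hk.eq_or_lt with rfl | hk
  · obtain rfl : m = n := by omega
    exact (h.max_add_le_of_one hq).trans (le_max_add_of_one hp)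
  rcases hm.eq_or_lt with rfl | hm
  · obtain rfl : k = n := by omega
    rw [max_comm, max_comm (k * s.1)]
    exact (h.swap.max_add_le_of_one hq').trans (le_max_add_of_one (s := s.swap) hp')
  rw [← max_add_add_right]
  refine max_le (h.fst_add_le hk hm hle hlt hp hq) ?_
  rw [max_comm]
  exact h.swap.fst_add_le (s := s.swap) hm hk ⟨hle.2, hle.1⟩ hlt' hp' hq'

theorem IsBalanced.eq_of_add_eq (h : IsBalanced k m s) (hk : 1 ≤ k) (hm : 1 ≤ m)
    (hs : s.1 + 1 + (s.2 + 1) = k + m) :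
    s.1 + 1 = m ∧ s.2 + 1 = k := by
  obtain ⟨i, l⟩ := s
  obtain ⟨hfst, hsnd⟩ := h
  dsimp only at *
  rcases lt_trichotomy (i + 1) m with hlt | heq | hgt
  · have hl : k ≤ l := by omega
    nlinarith [Nat.mul_le_mul_left m hl]
  · omega
  · have hi : m ≤ i := by omega
    nlinarith [Nat.mul_le_mul_left k hi]

end IsBalanced

section Greedy

/-- A step rule is greedy for the weights `k` and `m` when it always selects a lightest monomial
among the next power of `a` and the next power of `c`. -/
structure IsGreedy (k m : ℕ) (step : ℕ × ℕ → Bool) : Prop where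
  le_of_right : ∀ s, step s = true → k * (s.1 + 1) ≤ m * (s.2 + 1)
  le_of_up : ∀ s, step s = false → m * (s.2 + 1) ≤ k * (s.1 + 1)

variable {k m n : ℕ} {step : ℕ × ℕ → Bool}

theorem IsGreedy.isBalanced (h : IsGreedy k m step) (j : ℕ) :
    IsBalanced k m (latticePath step j) := by
  induction j with
  | zero => constructor <;> simp [latticePath]
  | succ j ih =>
    obtain ⟨hfst, hsnd⟩ := ih
    simp only [latticePath]
    split_ifs with hs
    · exact ⟨h.le_of_right _ hs, hsnd.trans (by gcongr; simp)⟩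
    · exact ⟨hfst.trans (by gcongr; simp), h.le_of_up _ (by simpa using hs)⟩

theorem IsGreedy.axisExponent_weight (h : IsGreedy k m step) (j : ℕ) :
    k * (axisExponent step j).1 + m * (axisExponent step j).2 =
      max (k * (latticePath step j).1) (m * (latticePath step j).2) := by
  cases j with
  | zero => simp [axisExponent, latticePath]
  | succ j =>
    obtain ⟨hfst, hsnd⟩ := h.isBalanced j
    simp only [axisExponent, latticePath]
    split_ifs
    · simpa using hsnd
    · simpa using hfst

theorem IsGreedy.axisExponent_weight_add_le (h : IsGreedy k m step) (hk : 1 ≤ k) (hm : 1 ≤ m)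
    (hkm : k + m = n + 1) {j j' p q : ℕ} (hlt : j' < j) (hp : n < j + p) (hq : j' + q ≤ n) :
    k * (axisExponent step j').1 + m * (axisExponent step j').2 + q ≤
      k * (axisExponent step j).1 + m * (axisExponent step j).2 + p := by
  rw [h.axisExponent_weight, h.axisExponent_weight]
  apply (h.isBalanced j').max_add_le hk hm hkm (latticePath_monotone step hlt.le)
  all_goals simpa only [latticePath_fst_add_snd]

theorem IsGreedy.exists_axisExponent_eq_fst (h : IsGreedy k m step) (hm : 1 ≤ m) (i : ℕ) :
    ∃ j, axisExponent step j = (i, 0) := by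
  have hi : i ≤ (latticePath step (i + k * i)).1 := by
    by_contra! hlt
    have hsum := latticePath_fst_add_snd step (i + k * i)
    have hsnd := (h.isBalanced (i + k * i)).snd_le
    nlinarith
  obtain ⟨j, -, hj⟩ := exists_le_axisExponent_eq_fst hi
  exact ⟨j, hj⟩

theorem IsGreedy.exists_axisExponent_eq_snd (h : IsGreedy k m step) (hk : 1 ≤ k) (l : ℕ) :
    ∃ j, axisExponent step j = (0, l) := by
  have hl : l ≤ (latticePath step (l + m * l)).2 := by
    by_contra! hlt
    have hsum := latticePath_fst_add_snd step (l + m * l)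
    have hfst := (h.isBalanced (l + m * l)).fst_le
    nlinarith
  obtain ⟨j, -, hj⟩ := exists_le_axisExponent_eq_snd hl
  exact ⟨j, hj⟩

/-- The greedy rule which at `(m - 1, k - 1)`, where `a ^ m` and `c ^ k` have the same weight,
steps as told by `right`. -/
def tieRule (k m : ℕ) (right : Bool) (s : ℕ × ℕ) : Bool :=
  if s.1 + 1 = m ∧ s.2 + 1 = k then right else decide (k * (s.1 + 1) ≤ m * (s.2 + 1))

theorem isGreedy_tieRule (k m : ℕ) (right : Bool) : IsGreedy k m (tieRule k m right) := by
  constructor <;> intro s hs <;> rw [tieRule] at hs <;> split_ifs at hs with htie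
  · exact (by rw [htie.1, htie.2, mul_comm] : k * (s.1 + 1) = m * (s.2 + 1)).le
  · exact of_decide_eq_true hs
  · exact (by rw [htie.1, htie.2, mul_comm] : m * (s.2 + 1) = k * (s.1 + 1)).le
  · exact (not_le.mp (of_decide_eq_false hs)).le

theorem latticePath_tieRule_eq (hkm : k + m = n + 1) (right right' : Bool) {j : ℕ} (hj : j < n) :
    latticePath (tieRule k m right) j = latticePath (tieRule k m right') j := by
  induction j with
  | zero => rfl
  | succ j ih =>
    have hsum := latticePath_fst_add_snd (tieRule k m right') j
    have htie : ¬ ((latticePath (tieRule k m right') j).1 + 1 = m ∧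
        (latticePath (tieRule k m right') j).2 + 1 = k) := by omega
    simp only [latticePath, ih (by omega), tieRule, if_neg htie]

theorem axisExponent_tieRule_eq (hkm : k + m = n + 1) (right right' : Bool) {j : ℕ} (hj : j < n) :
    axisExponent (tieRule k m right) j = axisExponent (tieRule k m right') j := by
  cases j with
  | zero => rfl
  | succ j =>
    have hsum := latticePath_fst_add_snd (tieRule k m right') j
    have htie : ¬ ((latticePath (tieRule k m right') j).1 + 1 = m ∧
        (latticePath (tieRule k m right') j).2 + 1 = k) := by omega
    simp only [axisExponent, latticePath_tieRule_eq hkm right right' (Nat.lt_of_succ_lt hj),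
      tieRule, if_neg htie]

theorem axisExponent_tieRule_self (hk : 1 ≤ k) (hm : 1 ≤ m) (hkm : k + m = n + 1) (right : Bool) :
    axisExponent (tieRule k m right) n = if right then (m, 0) else (0, k) := by
  obtain ⟨j, rfl⟩ : ∃ j, n = j + 1 := ⟨n - 1, by omega⟩
  have hsum := latticePath_fst_add_snd (tieRule k m right) j
  have htie := ((isGreedy_tieRule k m right).isBalanced j).eq_of_add_eq hk hm (by omega)
  simp [axisExponent, tieRule, htie]

end Greedy

section Jets

/-- The exponent of the monomial `b ^ p * u_j`, where `u_j` is the `j`-th power of `a` or `c`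
selected by a lattice path and `α = (j, p)`. -/
def pathExponent (step : ℕ × ℕ → Bool) (α : ℕ × ℕ) : ℕ × ℕ × ℕ :=
  ((axisExponent step α.1).1, α.2, (axisExponent step α.1).2)

theorem pathExponent_injective (step : ℕ × ℕ → Bool) : Function.Injective (pathExponent step) :=
  fun α α' h => by
    simp only [pathExponent, Prod.mk.injEq] at h
    exact Prod.ext (axisExponent_injective step (Prod.ext h.1 h.2.2)) h.2.1

/-- The weight of an exponent when `a`, `b`, `c` have weights `k`, `1`, `m`. For `k + m = n + 1`
it is `f_k (A_n β)`. -/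
def tripleWeight (k m : ℕ) (β : ℕ × ℕ × ℕ) : ℕ := k * β.1 + β.2.1 + m * β.2.2

theorem IsGreedy.tripleWeight_pathExponent_le {k m n : ℕ} {step : ℕ × ℕ → Bool}
    (h : IsGreedy k m step) (hk : 1 ≤ k) (hm : 1 ≤ m) (hkm : k + m = n + 1) {α α' : ℕ × ℕ}
    (hlt : α'.1 < α.1) (hα : n < α.1 + α.2) (hα' : α'.1 + α'.2 ≤ n) :
    tripleWeight k m (pathExponent step α') ≤ tripleWeight k m (pathExponent step α) := by
  have hle := h.axisExponent_weight_add_le hk hm hkm hlt hα hα'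
  simp only [tripleWeight, pathExponent]
  omega

variable {K Q : Type*} [CommRing K] [CommRing Q] [Algebra K Q]

/-- The monomial `a ^ β₁ * b ^ β₂ * c ^ β₃`. -/
def tripleMonomial (a b c : Q) (β : ℕ × ℕ × ℕ) : Q := a ^ β.1 * b ^ β.2.1 * c ^ β.2.2

/- The relation turns a product `a * c` of weight `k + m` into a combination of `a`, `c` and
`b, …, b ^ (n + 1)`, none of which is heavier. -/
theorem tripleMonomial_mem_of_monotone {n k m : ℕ} {a b c : Q} {F : ℕ → Submodule K Q}
    (hF : Monotone F) (hrel : (1 + a) * (1 + c) = (1 + b) ^ (n + 1)) (hkm : n + 1 ≤ k + m)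
    (hab : ∀ i p, tripleMonomial a b c (i, p, 0) ∈ F (tripleWeight k m (i, p, 0)))
    (hbc : ∀ p l, tripleMonomial a b c (0, p, l) ∈ F (tripleWeight k m (0, p, l)))
    (i p l : ℕ) : tripleMonomial a b c (i, p, l) ∈ F (tripleWeight k m (i, p, l)) := by
  induction i generalizing p l with
  | zero => exact hbc p l
  | succ i ihi =>
    induction l generalizing p with
    | zero => exact hab (i + 1) p
    | succ l ihl =>
      have hexpand : tripleMonomial a b c (i + 1, p, l + 1) =
          ∑ q ∈ range (n + 1), (n + 1).choose (q + 1) • tripleMonomial a b c (i, p + (q + 1), l) -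
            tripleMonomial a b c (i + 1, p, l) - tripleMonomial a b c (i, p, l + 1) := by
        have hsum : ∑ q ∈ range (n + 1),
            (n + 1).choose (q + 1) • tripleMonomial a b c (i, p + (q + 1), l) =
              a ^ i * b ^ p * c ^ l * ((1 + b) ^ (n + 1) - 1) := by
          have hpow : (1 + b) ^ (n + 1) - 1 =
              ∑ q ∈ range (n + 1), (n + 1).choose (q + 1) • b ^ (q + 1) := by
            rw [one_add_pow, sum_range_succ', pow_zero, Nat.choose_zero_right, one_smul,
              add_sub_cancel_right]
          rw [hpow, mul_sum]
          refine sum_congr rfl fun q _ => ?_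
          simp only [tripleMonomial, nsmul_eq_mul]
          ring
        rw [hsum, ← hrel]
        simp only [tripleMonomial]
        ring
      rw [hexpand]
      refine sub_mem (sub_mem (sum_mem fun q hq => nsmul_mem (hF ?_ (ihi _ _)) _)
        (hF ?_ (ihl p))) (hF ?_ (ihi p (l + 1)))
      · have hq := mem_range.mp hq
        simp only [tripleWeight]
        linarith
      all_goals simp only [tripleWeight]; linarith

theorem span_range_tripleMonomial {a b : Q} (h : Algebra.adjoin K {a, b} = ⊤) (c : Q) :
    Submodule.span K (Set.range (tripleMonomial a b c)) = ⊤ := by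
  rw [eq_top_iff, ← Algebra.top_toSubmodule, ← h, Algebra.adjoin_eq_span]
  refine Submodule.span_mono fun z hz => ?_
  obtain ⟨i, p, rfl⟩ := (Submonoid.mem_closure_pair _ _ _).mp hz
  exact ⟨(i, p, 0), by simp [tripleMonomial]⟩

/-- Elements `a`, `b`, `c` of a nilpotent ideal which are related like `x - 1`, `x * y - 1` and
`x ^ n * y ^ (n + 1) - 1`, the generators of the toric surface, in the ring of `n`-jets. -/
structure IsJetTriple (𝔪 : Ideal Q) (n : ℕ) (a b c : Q) : Prop where
  pow_eq_bot : 𝔪 ^ (n + 1) = ⊥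
  fst_mem : a ∈ 𝔪
  snd_mem : b ∈ 𝔪
  trd_mem : c ∈ 𝔪
  rel : (1 + a) * (1 + c) = (1 + b) ^ (n + 1)

namespace IsJetTriple

variable {𝔪 : Ideal Q} {n k m : ℕ} {a b c : Q} {step : ℕ × ℕ → Bool}

theorem tripleMonomial_eq_zero (h : IsJetTriple 𝔪 n a b c) {β : ℕ × ℕ × ℕ}
    (hβ : n < β.1 + β.2.1 + β.2.2) : tripleMonomial a b c β = 0 := by
  have hmem : tripleMonomial a b c β ∈ 𝔪 ^ (β.1 + β.2.1 + β.2.2) := by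
    rw [pow_add, pow_add]
    exact Ideal.mul_mem_mul (Ideal.mul_mem_mul (Ideal.pow_mem_pow h.fst_mem _)
      (Ideal.pow_mem_pow h.snd_mem _)) (Ideal.pow_mem_pow h.trd_mem _)
  simpa [h.pow_eq_bot] using Ideal.pow_le_pow_right hβ hmem

theorem pow_succ_eq_zero (h : IsJetTriple 𝔪 n a b c) {x : Q} (hx : x ∈ 𝔪) : x ^ (n + 1) = 0 := by
  simpa [h.pow_eq_bot] using Ideal.pow_mem_pow hx (n + 1)

variable (K)

theorem tripleMonomial_mem_span_adjoin (h : IsJetTriple 𝔪 n a b c) {j p : ℕ}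
    (hjp : n < j + 1 + p) : tripleMonomial a b c (pathExponent step (j + 1, p)) ∈
      Submodule.span (Algebra.adjoin K {b})
        ((fun j' => tripleMonomial a b c (pathExponent step (j', 0))) '' Set.Iic j) := by
  set M := Submodule.span (Algebra.adjoin K {b})
    ((fun j' => tripleMonomial a b c (pathExponent step (j', 0))) '' Set.Iic j)
  let b' : Algebra.adjoin K {b} := ⟨b, Algebra.self_mem_adjoin_singleton K b⟩
  have ha : ∀ i ≤ (latticePath step j).1, a ^ i ∈ M := fun i hi => by
    obtain ⟨j', hj', he⟩ := exists_le_axisExponent_eq_fst hi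
    exact Submodule.subset_span ⟨j', hj', by simp [tripleMonomial, pathExponent, he]⟩
  have hc : ∀ l ≤ (latticePath step j).2, c ^ l ∈ M := fun l hl => by
    obtain ⟨j', hj', he⟩ := exists_le_axisExponent_eq_snd hl
    exact Submodule.subset_span ⟨j', hj', by simp [tripleMonomial, pathExponent, he]⟩
  have hε : IsUnit ((1 + b') ^ (n + 1)) :=
    (IsNilpotent.isUnit_one_add ⟨n + 1, Subtype.ext (h.pow_succ_eq_zero h.snd_mem)⟩).pow _
  have hac : (1 + a) * (1 + c) = algebraMap _ Q ((1 + b') ^ (n + 1)) := h.rel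
  have hsum := latticePath_fst_add_snd step j
  simp only [pathExponent, axisExponent]
  split_ifs
  · have hr : b' ^ p • a ^ ((latticePath step j).1 + (latticePath step j).2 + 1) = 0 := by
      refine Eq.trans ?_ (h.tripleMonomial_eq_zero (β := (j + 1, p, 0)) hjp)
      rw [hsum, Algebra.smul_def, tripleMonomial, pow_zero, mul_one, mul_comm]
      rfl
    have hmem := smul_pow_succ_mem hac hε ha hc hr
    rwa [Algebra.smul_def, mul_comm, ← mul_one (_ * _), ← pow_zero c] at hmem
  · have hr : b' ^ p • c ^ ((latticePath step j).2 + (latticePath step j).1 + 1) = 0 := by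
      refine Eq.trans ?_ (h.tripleMonomial_eq_zero (β := (0, p, j + 1)) (by grind))
      rw [add_comm (Prod.snd _), hsum, Algebra.smul_def, tripleMonomial, pow_zero, one_mul]
      rfl
    have hmem := smul_pow_succ_mem (mul_comm (1 + a) _ ▸ hac) hε hc ha hr
    rwa [Algebra.smul_def, ← one_mul (_ * _), ← pow_zero a, ← mul_assoc] at hmem

theorem tripleMonomial_pathExponent_mem_span (h : IsJetTriple 𝔪 n a b c)
    (step : ℕ × ℕ → Bool) {j p : ℕ} (hjp : n < j + p) :
    tripleMonomial a b c (pathExponent step (j, p)) ∈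
      Submodule.span K ((fun α => tripleMonomial a b c (pathExponent step α)) ''
        {α | α.1 < j ∧ α.1 + α.2 ≤ n}) := by
  induction j using Nat.strong_induction_on generalizing p with
  | _ j ih =>
  rcases j with _ | j
  · rw [h.tripleMonomial_eq_zero (by simpa [pathExponent, axisExponent] using hjp)]
    exact zero_mem _
  · have hmem := h.tripleMonomial_mem_span_adjoin K (step := step) hjp
    rw [← Submodule.restrictScalars_mem K, restrictScalars_span_adjoin_singleton] at hmem
    refine Submodule.span_le.mpr ?_ hmem
    rintro _ ⟨q, _, ⟨j', hj', rfl⟩, rfl⟩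
    have hj' : j' < j + 1 := Nat.lt_succ_iff.mpr hj'
    have hb : b ^ q * tripleMonomial a b c (pathExponent step (j', 0)) =
        tripleMonomial a b c (pathExponent step (j', q)) := by
      simp only [tripleMonomial, pathExponent]
      ring
    rw [SetLike.mem_coe, hb]
    rcases le_or_gt (j' + q) n with hle | hlt
    · exact Submodule.subset_span ⟨(j', q), ⟨hj', hle⟩, rfl⟩
    · refine Submodule.span_mono (Set.image_mono fun α hα => ?_) (ih j' hj' hlt)
      exact ⟨hα.1.trans hj', hα.2⟩

theorem tripleMonomial_mem_span (h : IsJetTriple 𝔪 n a b c) (hstep : IsGreedy k m step)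
    (hk : 1 ≤ k) (hm : 1 ≤ m) (hkm : k + m = n + 1) (β : ℕ × ℕ × ℕ) :
    tripleMonomial a b c β ∈
      Submodule.span K ((fun α => tripleMonomial a b c (pathExponent step α)) ''
        {α | α.1 + α.2 ≤ n ∧ tripleWeight k m (pathExponent step α) ≤ tripleWeight k m β}) := by
  let F : ℕ → Submodule K Q := fun w =>
    Submodule.span K ((fun α => tripleMonomial a b c (pathExponent step α)) ''
      {α | α.1 + α.2 ≤ n ∧ tripleWeight k m (pathExponent step α) ≤ w})
  have hF : Monotone F := fun w w' hw =>
    Submodule.span_mono (Set.image_mono fun α hα => ⟨hα.1, hα.2.trans hw⟩)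
  have hpath : ∀ α, tripleMonomial a b c (pathExponent step α) ∈
      F (tripleWeight k m (pathExponent step α)) := by
    intro α
    rcases le_or_gt (α.1 + α.2) n with hle | hlt
    · exact Submodule.subset_span ⟨α, ⟨hle, le_rfl⟩, rfl⟩
    · refine Submodule.span_mono (Set.image_mono fun α' hα' => ?_)
        (h.tripleMonomial_pathExponent_mem_span K step hlt)
      exact ⟨hα'.2, hstep.tripleWeight_pathExponent_le hk hm hkm hα'.1 hlt hα'.2⟩
  refine tripleMonomial_mem_of_monotone hF h.rel hkm.ge (fun i p => ?_) (fun p l => ?_)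
    β.1 β.2.1 β.2.2
  · obtain ⟨j, hj⟩ := hstep.exists_axisExponent_eq_fst hm i
    simpa only [pathExponent, hj] using hpath (j, p)
  · obtain ⟨j, hj⟩ := hstep.exists_axisExponent_eq_snd hk l
    simpa only [pathExponent, hj] using hpath (j, p)

end IsJetTriple

end Jets

section JetRing

open MvPolynomial

theorem mem_Lam2 {n : ℕ} {α : ℕ × ℕ} : α ∈ Lam2 n ↔ 1 ≤ α.1 + α.2 ∧ α.1 + α.2 ≤ n := by
  simp only [Lam2, mem_filter, mem_product, mem_range]
  omega

theorem mem_Lam3 {n : ℕ} {β : ℕ × ℕ × ℕ} :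
    β ∈ Lam3 n ↔ 1 ≤ β.1 + β.2.1 + β.2.2 ∧ β.1 + β.2.1 + β.2.2 ≤ n := by
  simp only [Lam3, mem_filter, mem_product, mem_range]
  omega

/-- The exponent `(α₁, α₂)` as a finitely supported function. -/
noncomputable def bidegree (α : ℕ × ℕ) : Fin 2 →₀ ℕ := Finsupp.single 0 α.1 + Finsupp.single 1 α.2

theorem degree_bidegree (α : ℕ × ℕ) : (bidegree α).degree = α.1 + α.2 := by
  simp [bidegree]

theorem bidegree_injective : Function.Injective bidegree := fun α α' h => by
  have h0 := DFunLike.congr_fun h 0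
  have h1 := DFunLike.congr_fun h 1
  exact Prod.ext (by simpa [bidegree] using h0) (by simpa [bidegree] using h1)

theorem coeff_bidegree_X_pow_mul_X_pow {R : Type*} [CommSemiring R] (α v : ℕ × ℕ) :
    coeff (bidegree α) (X 0 ^ v.1 * X 1 ^ v.2 : MvPolynomial (Fin 2) R) =
      if v = α then 1 else 0 := by
  rw [X_pow_eq_monomial, X_pow_eq_monomial, monomial_mul, one_mul, coeff_monomial]
  exact if_congr bidegree_injective.eq_iff rfl rfl

theorem coeff_bidegree_one_add_X_pow {R : Type*} [CommSemiring R] (α v : ℕ × ℕ) :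
    coeff (bidegree α) ((1 + X 0) ^ v.1 * (1 + X 1) ^ v.2 : MvPolynomial (Fin 2) R) =
      ((v.1.choose α.1 * v.2.choose α.2 : ℕ) : R) := by
  have hterm : ∀ γ : ℕ × ℕ, coeff (bidegree α)
      (v.1.choose γ.1 • X 0 ^ γ.1 * v.2.choose γ.2 • X 1 ^ γ.2 : MvPolynomial (Fin 2) R) =
        if γ = α then ((v.1.choose α.1 * v.2.choose α.2 : ℕ) : R) else 0 := by
    intro γ
    rw [smul_mul_smul_comm, coeff_smul, coeff_bidegree_X_pow_mul_X_pow, smul_ite, smul_zero,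
      nsmul_one]
    split_ifs with h <;> simp [h]
  rw [one_add_pow, one_add_pow, sum_mul_sum, ← sum_product', coeff_sum, sum_congr rfl
    fun γ _ => hterm γ, sum_ite_eq', ite_eq_left_iff, mem_product, mem_range, mem_range]
  intro h
  rcases not_and_or.mp h with h | h <;> simp [Nat.choose_eq_zero_of_lt (not_lt.mp h)]

/-- The `ℂ`-algebra of `n`-jets of functions at a point of the plane. -/
abbrev JetRing (n : ℕ) : Type := MvPolynomial (Fin 2) ℂ ⧸ idealOfVars (Fin 2) ℂ ^ (n + 1)

/-- The ideal of the jets which vanish at the point. -/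
noncomputable def jetIdeal (n : ℕ) : Ideal (JetRing n) :=
  (idealOfVars (Fin 2) ℂ).map (Ideal.Quotient.mk _)

/-- The jet of the function `x` for `i = 0` and `y` for `i = 1`, at the point `(1, 1)`. -/
noncomputable def jetCoord (n : ℕ) (i : Fin 2) : JetRing n := Ideal.Quotient.mk _ (1 + X i)

/-- The coefficients of a jet without its constant term. -/
noncomputable def jetCoeff (n : ℕ) : JetRing n →ₗ[ℂ] (Lam2 n → ℂ) :=
  (Submodule.liftQ ((idealOfVars (Fin 2) ℂ ^ (n + 1)).restrictScalars ℂ)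
    (LinearMap.pi fun α => lcoeff ℂ (bidegree α.1)) fun f hf => funext fun α =>
      (mem_pow_idealOfVars_iff' _ _).mp hf _ (by
        rw [degree_bidegree]
        exact Nat.lt_succ_of_le (mem_Lam2.mp α.2).2)).comp
    (Submodule.Quotient.restrictScalarsEquiv ℂ _).symm.toLinearMap

theorem jetCoeff_mk (n : ℕ) (f : MvPolynomial (Fin 2) ℂ) (α : Lam2 n) :
    jetCoeff n (Ideal.Quotient.mk _ f) α = coeff (bidegree α.1) f :=
  rfl

theorem jetCoeff_surjective (n : ℕ) : Function.Surjective (jetCoeff n) := by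
  rw [← LinearMap.range_eq_top, eq_top_iff, ← (Pi.basisFun ℂ (Lam2 n)).span_eq, Submodule.span_le]
  rintro _ ⟨α, rfl⟩
  refine ⟨Ideal.Quotient.mk _ (X 0 ^ α.1.1 * X 1 ^ α.1.2), funext fun γ => ?_⟩
  rw [jetCoeff_mk, coeff_bidegree_X_pow_mul_X_pow, Pi.basisFun_apply, Pi.single_apply]
  exact if_congr (by rw [eq_comm, Subtype.ext_iff]) rfl rfl

theorem jetCoeff_pow_mul_pow (n : ℕ) (v : ℕ × ℕ) :
    jetCoeff n (jetCoord n 0 ^ v.1 * jetCoord n 1 ^ v.2) = vbar n v := by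
  ext α
  rw [jetCoord, jetCoord, ← map_pow, ← map_pow, ← map_mul, jetCoeff_mk,
    coeff_bidegree_one_add_X_pow, vbar]

/-- The jets of `x - 1`, `x * y - 1` and `x ^ n * y ^ (n + 1) - 1`, evaluated in monomials. -/
noncomputable def jetMonomial (n : ℕ) : ℕ × ℕ × ℕ → JetRing n :=
  tripleMonomial (jetCoord n 0 - 1) (jetCoord n 0 * jetCoord n 1 - 1)
    (jetCoord n 0 ^ n * jetCoord n 1 ^ (n + 1) - 1)

theorem jetCoeff_jetMonomial (n : ℕ) (β : ℕ × ℕ × ℕ) : jetCoeff n (jetMonomial n β) = cvec n β := by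
  rw [jetMonomial, tripleMonomial, sub_one_pow, sub_one_pow, sub_one_pow, mul_assoc, sum_mul_sum,
    ← sum_product', sum_mul_sum, ← sum_product', map_sum, cvec]
  refine sum_congr rfl fun γ hγ => ?_
  simp only [mem_product, mem_range] at hγ
  have hsign : β.1 + β.2.1 + β.2.2 - (γ.1 + γ.2.1 + γ.2.2) =
      (β.1 - γ.1) + (β.2.1 - γ.2.1) + (β.2.2 - γ.2.2) := by omega
  rw [← jetCoeff_pow_mul_pow, ← map_smul, hsign, Algebra.smul_def (A := JetRing n)]
  simp only [Amap, map_mul, map_pow, map_neg, map_one, map_natCast]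
  push_cast
  ring_nf

theorem isJetTriple_jetCoord (n : ℕ) : IsJetTriple (jetIdeal n) n (jetCoord n 0 - 1)
    (jetCoord n 0 * jetCoord n 1 - 1) (jetCoord n 0 ^ n * jetCoord n 1 ^ (n + 1) - 1) := by
  have hcoord : ∀ i, jetCoord n i ≡ 1 [SMOD jetIdeal n] := fun i => by
    rw [SModEq.sub_mem, jetCoord, map_add, map_one, add_sub_cancel_left]
    exact Ideal.mem_map_of_mem _ (Ideal.subset_span (Set.mem_range_self i))
  constructor
  · rw [jetIdeal, ← Ideal.map_pow, Ideal.map_quotient_self]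
  · exact SModEq.sub_mem.mp (hcoord 0)
  · simpa using SModEq.sub_mem.mp ((hcoord 0).mul (hcoord 1))
  · simpa using SModEq.sub_mem.mp (((hcoord 0).pow n).mul ((hcoord 1).pow (n + 1)))
  · ring

theorem adjoin_jetCoord (n : ℕ) : Algebra.adjoin ℂ {jetCoord n 0, jetCoord n 1} = ⊤ := by
  have hpoly : Algebra.adjoin ℂ {1 + X 0, 1 + X 1} =
      (⊤ : Subalgebra ℂ (MvPolynomial (Fin 2) ℂ)) := by
    rw [eq_top_iff, ← adjoin_range_X, Algebra.adjoin_le_iff, Set.range_subset_iff]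
    set S : Subalgebra ℂ (MvPolynomial (Fin 2) ℂ) := Algebra.adjoin ℂ {1 + X 0, 1 + X 1}
    have h0 : 1 + X 0 ∈ S := Algebra.subset_adjoin (Set.mem_insert _ _)
    have h1 : 1 + X 1 ∈ S := Algebra.subset_adjoin (Set.mem_insert_of_mem _ rfl)
    exact Fin.forall_fin_two.mpr
      ⟨by simpa using sub_mem h0 (one_mem S), by simpa using sub_mem h1 (one_mem S)⟩
  have himage : {jetCoord n 0, jetCoord n 1} =
      Ideal.Quotient.mkₐ ℂ (idealOfVars (Fin 2) ℂ ^ (n + 1)) '' {1 + X 0, 1 + X 1} :=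
    (Set.image_pair (Ideal.Quotient.mkₐ ℂ (idealOfVars (Fin 2) ℂ ^ (n + 1))) _ _).symm
  rw [himage, ← AlgHom.map_adjoin, hpoly, Algebra.map_top, AlgHom.range_eq_top]
  exact Ideal.Quotient.mkₐ_surjective ℂ _

theorem span_range_jetMonomial (n : ℕ) : Submodule.span ℂ (Set.range (jetMonomial n)) = ⊤ := by
  have hnil : IsNilpotent (jetCoord n 0 - 1) :=
    ⟨n + 1, (isJetTriple_jetCoord n).pow_succ_eq_zero (isJetTriple_jetCoord n).fst_mem⟩
  refine span_range_tripleMonomial (eq_top_iff.mpr ?_) _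
  rw [← adjoin_jetCoord]
  exact adjoin_le_adjoin_sub_one hnil

theorem span_range_cvec (n : ℕ) : Submodule.span ℂ (Set.range (cvec n)) = ⊤ := by
  have hrange : Set.range (cvec n) = jetCoeff n '' Set.range (jetMonomial n) := by
    rw [← Set.range_comp]
    exact congrArg Set.range (funext fun β => (jetCoeff_jetMonomial n β).symm)
  rw [hrange, Submodule.span_image, span_range_jetMonomial, Submodule.map_top,
    LinearMap.range_eq_top.mpr (jetCoeff_surjective n)]

theorem cvec_zero (n : ℕ) : cvec n (0, 0, 0) = 0 := by
  ext α
  rw [← jetCoeff_jetMonomial, jetMonomial, tripleMonomial, pow_zero, pow_zero, pow_zero, mul_one,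
    mul_one, ← map_one (Ideal.Quotient.mk _), jetCoeff_mk, coeff_one, if_neg, Pi.zero_apply]
  intro h
  have hdeg := congrArg Finsupp.degree h
  rw [map_zero, degree_bidegree] at hdeg
  exact (Nat.ne_of_lt (mem_Lam2.mp α.2).1) hdeg

end JetRing

section OrderFunction

variable {n k m : ℕ} {step : ℕ × ℕ → Bool} {J : Finset (ℕ × ℕ × ℕ)}

theorem memSA_iff_linearIndependent : memSA n J ↔ J ⊆ Lam3 n ∧ J.card = (Lam2 n).card ∧
    LinearIndependent ℂ fun β : J => cvec n β := by
  refine and_congr_right fun _ => and_congr_right fun hcard => ?_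
  have hdet : ∀ e : Lam2 n ≃ J, (Matrix.of fun i j => cvec n (e i) j).det ≠ 0 ↔
      LinearIndependent ℂ fun β : J => cvec n β := fun e => by
    rw [← linearIndependent_equiv e, ← isUnit_iff_ne_zero, ← Matrix.isUnit_iff_isUnit_det,
      ← Matrix.linearIndependent_rows_iff_isUnit]
    rfl
  exact ⟨fun h => (hdet _).mp (h (Finset.equivOfCardEq hcard.symm)), fun h e => (hdet e).mpr h⟩

theorem memSA.exists_basis (h : memSA n J) :
    ∃ B : Module.Basis J ℂ (Lam2 n → ℂ), ∀ β, B β = cvec n β := by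
  obtain ⟨-, hcard, hli⟩ := memSA_iff_linearIndependent.mp h
  have hspan := hli.span_eq_top_of_card_eq_finrank' (by simp [hcard])
  exact ⟨Module.Basis.mk hli hspan.ge, Module.Basis.mk_apply hli hspan.ge⟩

/-- The exponents `pathExponent step α` with `α ∈ Λ_{2,n}`. For a greedy rule this is an element of
`S_{A_n}` at which `f_k` takes its minimum. -/
def pathBasis (n : ℕ) (step : ℕ × ℕ → Bool) : Finset (ℕ × ℕ × ℕ) :=
  (Lam2 n).image (pathExponent step)

theorem cvec_mem_span (hstep : IsGreedy k m step) (hk : 1 ≤ k) (hm : 1 ≤ m) (hkm : k + m = n + 1)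
    (β : ℕ × ℕ × ℕ) : cvec n β ∈ Submodule.span ℂ
      (cvec n '' {β' | β' ∈ pathBasis n step ∧ tripleWeight k m β' ≤ tripleWeight k m β}) := by
  have hmem := Submodule.mem_map_of_mem (f := jetCoeff n)
    ((isJetTriple_jetCoord n).tripleMonomial_mem_span ℂ hstep hk hm hkm β)
  rw [Submodule.map_span] at hmem
  rw [← jetCoeff_jetMonomial]
  refine Submodule.span_le.mpr ?_ hmem
  rintro _ ⟨_, ⟨α, ⟨hα, hw⟩, rfl⟩, rfl⟩
  change jetCoeff n (jetMonomial n (pathExponent step α)) ∈ _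
  rw [jetCoeff_jetMonomial]
  rcases Nat.eq_zero_or_pos (α.1 + α.2) with h0 | hpos
  · obtain ⟨h1, h2⟩ := Nat.add_eq_zero_iff.mp h0
    simp only [pathExponent, h1, h2, axisExponent, cvec_zero]
    exact zero_mem _
  · exact Submodule.subset_span
      ⟨_, ⟨mem_image_of_mem _ (mem_Lam2.mpr ⟨hpos, hα⟩), hw⟩, rfl⟩

theorem card_pathBasis (n : ℕ) (step : ℕ × ℕ → Bool) : (pathBasis n step).card = (Lam2 n).card :=
  card_image_of_injective _ (pathExponent_injective step)

theorem pathBasis_subset_Lam3 (n : ℕ) (step : ℕ × ℕ → Bool) : pathBasis n step ⊆ Lam3 n := by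
  refine image_subset_iff.mpr fun α hα => mem_Lam3.mpr ?_
  obtain ⟨j, p⟩ := α
  have hα := mem_Lam2.mp hα
  obtain ⟨h1, h2⟩ := axisExponent_le_latticePath step j
  have hsum := latticePath_fst_add_snd step j
  refine ⟨?_, by simp only [pathExponent]; omega⟩
  rcases j with _ | j
  · simpa [pathExponent, axisExponent] using hα.1
  · simp only [pathExponent, axisExponent]
    split_ifs <;> dsimp only <;> omega

theorem memSA_pathBasis (hstep : IsGreedy k m step) (hk : 1 ≤ k) (hm : 1 ≤ m)
    (hkm : k + m = n + 1) : memSA n (pathBasis n step) := by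
  refine memSA_iff_linearIndependent.mpr
    ⟨pathBasis_subset_Lam3 n step, card_pathBasis n step,
      linearIndependent_of_top_le_span_of_card_eq_finrank ?_ (by simp [card_pathBasis])⟩
  rw [← span_range_cvec, Submodule.span_le]
  rintro _ ⟨β, rfl⟩
  refine Submodule.span_mono ?_ (cvec_mem_span hstep hk hm hkm β)
  rintro _ ⟨β', hβ', rfl⟩
  exact ⟨⟨β', hβ'.1⟩, rfl⟩

theorem fk_mJ (hkm : k + m = n + 1) (J : Finset (ℕ × ℕ × ℕ)) :
    fk k (mJ n J) = ((∑ β ∈ J, tripleWeight k m β : ℕ) : ℤ) := by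
  have hm : (m : ℤ) = n + 1 - k := by omega
  simp only [fk, mJ, Prod.fst_sum, Prod.snd_sum]
  push_cast
  rw [mul_sum, mul_sum, ← sum_add_distrib]
  refine sum_congr rfl fun β _ => ?_
  simp only [Amap, tripleWeight]
  push_cast
  rw [hm]
  ring

theorem fk_mJ_pathBasis_le (hstep : IsGreedy k m step) (hk : 1 ≤ k) (hm : 1 ≤ m)
    (hkm : k + m = n + 1) (hJ : memSA n J) : fk k (mJ n (pathBasis n step)) ≤ fk k (mJ n J) := by
  obtain ⟨B, hB⟩ := (memSA_pathBasis hstep hk hm hkm).exists_basis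
  obtain ⟨B', hB'⟩ := hJ.exists_basis
  rw [fk_mJ hkm, fk_mJ hkm, Nat.cast_le, ← sum_coe_sort, ← sum_coe_sort J]
  refine sum_le_sum_of_mem_span_basis B B' fun β => ?_
  rw [hB']
  refine Submodule.span_mono ?_ (cvec_mem_span hstep hk hm hkm β)
  rintro _ ⟨β', ⟨hmem, hw⟩, rfl⟩
  exact ⟨⟨β', hmem⟩, hw, hB _⟩

/- The tie is reached at the last step of the path, so the two sets differ in one exponent only. -/
theorem mJ_pathBasis_tieRule_ne (hk : 1 ≤ k) (hm : 1 ≤ m) (hkm : k + m = n + 1) :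
    mJ n (pathBasis n (tieRule k m true)) ≠ mJ n (pathBasis n (tieRule k m false)) := by
  have hself := axisExponent_tieRule_self hk hm hkm
  refine fun h => (congrArg Prod.snd h).not_lt ?_
  simp only [mJ, pathBasis, Prod.snd_sum, sum_image (pathExponent_injective _).injOn]
  refine sum_lt_sum (fun α hα => ?_) ⟨(n, 0), mem_Lam2.mpr (by dsimp only; omega), ?_⟩
  · have hαn := (mem_Lam2.mp hα).2
    rcases (Nat.le_of_add_right_le hαn).lt_or_eq with hlt | heq
    · rw [pathExponent, pathExponent, axisExponent_tieRule_eq hkm true false hlt]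
    · simp [Amap, pathExponent, heq, hself]
  · simpa [Amap, pathExponent, hself] using Nat.lt_of_succ_le hk

end OrderFunction

theorem stmt0 (n : ℕ) (hn : 1 ≤ n) (k : ℕ) (hk1 : 1 ≤ k) (hkn : k ≤ n) :
    ∃ J J' : Finset (ℕ × ℕ × ℕ), memSA n J ∧ memSA n J' ∧
      mJ n J ≠ mJ n J' ∧ fk k (mJ n J) = fk k (mJ n J') ∧
      ∀ J'' : Finset (ℕ × ℕ × ℕ), memSA n J'' → fk k (mJ n J) ≤ fk k (mJ n J'') := by
  obtain ⟨m, hm, hkm⟩ : ∃ m, 1 ≤ m ∧ k + m = n + 1 := ⟨n + 1 - k, by omega, by omega⟩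
  have hgreedy := isGreedy_tieRule k m
  have hmem := fun right => memSA_pathBasis (hgreedy right) hk1 hm hkm
  have hmin := fun right J'' => fk_mJ_pathBasis_le (J := J'') (hgreedy right) hk1 hm hkm
  refine ⟨_, _, hmem true, hmem false, mJ_pathBasis_tieRule_ne hk1 hm hkm, ?_, hmin true⟩
  exact le_antisymm (hmin true _ (hmem false)) (hmin false _ (hmem true))
end

section
/- For every k ∈ {1,…,n}, the last vector of the sequence associated to η_k satisfies v_{n,η_k} = (0,k) or v_{n,η_k} = (n−k+1, 0). -/
open Finset

/-!
The functional `f_k` takes the positive values `k` on `(1, 0)` and `n + 1 - k` on `(n, n + 1)`, and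
the vectors `v_{j,η_k}` record the multiplicities met when the positive multiples of these two
vectors are listed by increasing value of `f_k`. Among the values below `k (n + 1 - k)` there are
`n - k` multiples of `k` and `k - 1` multiples of `n + 1 - k`, that is `n - 1` in all. Hence the
`n`-th entry of the list has value exactly `k (n + 1 - k)`: it is `(n + 1 - k) • (1, 0)` or
`k • (n, n + 1)`.
-/

theorem sSup_setOf_natCast_mul_le {a : ℕ} (ha : 0 < a) (b : ℕ) :
    sSup {m : ℕ | (m : ℤ) * a ≤ b} = b / a := by
  have hset : {m : ℕ | (m : ℤ) * a ≤ b} = Set.Iic (b / a) := by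
    ext m
    rw [Set.mem_ofPred_eq, Set.mem_Iic, Nat.le_div_iff_mul_le ha]
    norm_cast
  rw [hset, csSup_Iic]

theorem eq_of_mul_le_mul_of_add_eq {a b x y : ℕ} (ha : 0 < a) (hxy : x + y + 1 = a + b)
    (hle : y * b ≤ x * a) (hge : x * a ≤ (y + 1) * b) : x = b := by
  rcases lt_trichotomy x b with hlt | heq | hgt
  · have : x * a < y * b := calc
      x * a < b * a := Nat.mul_lt_mul_of_pos_right hlt ha
      _ = a * b := mul_comm b a
      _ ≤ y * b := Nat.mul_le_mul_right b (by omega)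
    omega
  · exact heq
  · have : (y + 1) * b < x * a := calc
      (y + 1) * b ≤ a * b := Nat.mul_le_mul_right b (by omega)
      _ = b * a := mul_comm a b
      _ < x * a := Nat.mul_lt_mul_of_pos_right hgt ha
    omega

/-- The sum of the `d i` with `i < m` and `i` of the same parity as `p`. With `d` the block lengths
of a sequence `η ∈ Ω`, it is a partial sum of the kind entering `v_{j,η}`. -/
def paritySum (d : ℕ → ℕ) (p m : ℕ) : ℕ :=
  ∑ i ∈ range m, if (Odd i ↔ Odd p) then d i else 0

section ParitySum

variable (d : ℕ → ℕ) (p m : ℕ)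

theorem paritySum_succ :
    paritySum d p (m + 1) = paritySum d p m + if (Odd m ↔ Odd p) then d m else 0 :=
  sum_range_succ _ m

theorem paritySum_add_two : paritySum d (p + 2) m = paritySum d p m := by
  simp only [paritySum, Nat.odd_add_one, not_not]

theorem paritySum_self_succ : paritySum d p (p + 1) = paritySum d p p + d p := by
  rw [paritySum_succ, if_pos Iff.rfl]

theorem paritySum_self_add_two : paritySum d p (p + 2) = paritySum d p (p + 1) := by
  rw [paritySum_succ, if_neg (by grind), add_zero]

theorem paritySum_add_paritySum_succ :
    paritySum d p m + paritySum d (p + 1) m = ∑ i ∈ range m, d i := by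
  rw [paritySum, paritySum, ← sum_add_distrib]
  refine sum_congr rfl fun i _ => ?_
  by_cases hi : Odd i <;> by_cases hp : Odd p <;> simp [hi, hp, Nat.odd_add_one]

end ParitySum

/-- `d` is the sequence of block lengths of the increasing merge of the positive multiples of two
weights, stopped after `N` multiples. The blocks alternate between the weights, and block `l`
consists of multiples of `w l`. After block `l`, the next multiple of `w l` is
`(paritySum d l (l + 1) + 1) * w l`, and block `l + 1` takes all multiples of `w (l + 1)` up to it;
in particular ties are won by the weight of the new block. Block `0` is empty. -/
structure IsGreedyMerge (N : ℕ) (w d : ℕ → ℕ) : Prop where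
  weight_pos : ∀ l, 0 < w l
  weight_add_two : ∀ l, w (l + 2) = w l
  weight_one_le_weight_zero : w 1 ≤ w 0
  block_zero : d 0 = 0
  block_succ : ∀ l, ∑ i ∈ range (l + 1), d i < N →
    d (l + 1) = min (N - ∑ i ∈ range (l + 1), d i)
      ((paritySum d l (l + 1) + 1) * w l / w (l + 1) - paritySum d (l + 1) (l + 1))

namespace IsGreedyMerge

variable {N : ℕ} {w d : ℕ → ℕ} {l : ℕ}

theorem weight_add_weight_succ (h : IsGreedyMerge N w d) (l : ℕ) :
    w l + w (l + 1) = w 0 + w 1 := by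
  induction l with
  | zero => rfl
  | succ l ih => rw [h.weight_add_two, add_comm, ih]

theorem last_le_next_and_next_le_next (h : IsGreedyMerge N w d)
    (hl : ∑ i ∈ range (l + 1), d i < N) :
    paritySum d l (l + 1) * w l ≤ (paritySum d (l + 1) (l + 1) + 1) * w (l + 1) ∧
      (paritySum d (l + 1) (l + 1) + 1) * w (l + 1) ≤ (paritySum d l (l + 1) + 1) * w l := by
  induction l with
  | zero => simpa [paritySum, h.block_zero] using h.weight_one_le_weight_zero
  | succ l ih =>
    have hsum := sum_range_succ d (l + 1)
    have hlt : ∑ i ∈ range (l + 1), d i < N := by omega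
    have hd := h.block_succ l hlt
    have hle := (Nat.le_div_iff_mul_le (h.weight_pos (l + 1))).2 (ih hlt).2
    have hcount : paritySum d (l + 1) (l + 2) =
        (paritySum d l (l + 1) + 1) * w l / w (l + 1) := by
      rw [paritySum_self_succ]
      omega
    rw [paritySum_add_two, paritySum_self_add_two, h.weight_add_two, hcount]
    exact ⟨Nat.div_mul_le_self _ _, (Nat.lt_div_mul_add (h.weight_pos _)).le.trans_eq (by ring)⟩

theorem count_lt_div (h : IsGreedyMerge N w d) (hl : ∑ i ∈ range (l + 1), d i < N) :
    paritySum d (l + 1) (l + 1) < (paritySum d l (l + 1) + 1) * w l / w (l + 1) :=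
  (Nat.le_div_iff_mul_le (h.weight_pos (l + 1))).2 (h.last_le_next_and_next_le_next hl).2

theorem block_pos (h : IsGreedyMerge N w d) (hl : ∑ i ∈ range (l + 1), d i < N) :
    0 < d (l + 1) := by
  have hlt := h.count_lt_div hl
  rw [h.block_succ l hl]
  omega

theorem min_le_sum_range (h : IsGreedyMerge N w d) (l : ℕ) :
    min l N ≤ ∑ i ∈ range (l + 1), d i := by
  induction l with
  | zero => simp
  | succ l ih =>
    rw [sum_range_succ]
    by_cases hl : ∑ i ∈ range (l + 1), d i < N
    · have := h.block_pos hl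
      omega
    · omega

theorem last_count (h : IsGreedyMerge N w d) (hw : w 0 + w 1 = N + 1)
    (hlt : ∑ i ∈ range (l + 1), d i < N) (hle : N ≤ ∑ i ∈ range (l + 2), d i) :
    paritySum d (l + 1) (l + 1) + (N - ∑ i ∈ range (l + 1), d i) = w l := by
  set x := paritySum d (l + 1) (l + 1) + (N - ∑ i ∈ range (l + 1), d i)
  have hweights := h.weight_add_weight_succ l
  have hparity := paritySum_add_paritySum_succ d l (l + 1)
  have hx_succ : paritySum d (l + 1) (l + 1) + 1 ≤ x := by omega
  have hx_div : x ≤ (paritySum d l (l + 1) + 1) * w l / w (l + 1) := by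
    have hsum : ∑ i ∈ range (l + 2), d i = ∑ i ∈ range (l + 1), d i + d (l + 1) :=
      sum_range_succ d (l + 1)
    have hd := h.block_succ l hlt
    have hcount := h.count_lt_div hlt
    omega
  refine eq_of_mul_le_mul_of_add_eq (h.weight_pos (l + 1))
    (by omega : x + paritySum d l (l + 1) + 1 = w (l + 1) + w l) ?_ ?_
  · exact (h.last_le_next_and_next_le_next hlt).1.trans (Nat.mul_le_mul_right _ hx_succ)
  · exact (Nat.le_div_iff_mul_le (h.weight_pos (l + 1))).1 hx_div

end IsGreedyMerge

theorem sum_range_tIdx_lt_and_le {η : OmegaData} {j : ℕ} (hj : 0 < j)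
    (hex : ∃ t, j ≤ ∑ i ∈ range (t + 1), η.d i) :
    ∑ i ∈ range (tIdx η j), η.d i < j ∧ j ≤ ∑ i ∈ range (tIdx η j + 1), η.d i := by
  refine ⟨?_, Nat.sInf_mem hex⟩
  rcases ht : tIdx η j with _ | t
  · simpa using hj
  · have hlt : t < tIdx η j := ht ▸ t.lt_succ_self
    exact not_le.1 (Nat.notMem_of_lt_sInf (s := {t | j ≤ ∑ i ∈ range (t + 1), η.d i}) hlt)

theorem vvec_eq_ite (η : OmegaData) (j : ℕ) :
    vvec η j = if (η.z = true) ↔ Odd (tIdx η j)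
      then (paritySum η.d (tIdx η j) (tIdx η j) + (j - ∑ i ∈ range (tIdx η j), η.d i), 0)
      else (0, paritySum η.d (tIdx η j) (tIdx η j) + (j - ∑ i ∈ range (tIdx η j), η.d i)) :=
  rfl

theorem IsGreedyMerge.exists_vvec_eq {N : ℕ} {w : ℕ → ℕ} {η : OmegaData}
    (h : IsGreedyMerge N w η.d) (hw : w 0 + w 1 = N + 1) :
    ∃ l, vvec η N = if (η.z = true) ↔ Odd (l + 1) then (w l, 0) else (0, w l) := by
  have hN : 0 < N := by
    have := h.weight_pos 0
    have := h.weight_pos 1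
    omega
  obtain ⟨hlt, hle⟩ := sum_range_tIdx_lt_and_le hN ⟨N, by simpa using h.min_le_sum_range N⟩
  have hv := vvec_eq_ite η N
  rcases ht : tIdx η N with _ | l
  · simp [ht, h.block_zero, hN.ne'] at hle
  · rw [ht] at hlt hle hv
    exact ⟨l, by rw [hv, h.last_count hw hlt hle]⟩

section Etak

variable {n k : ℕ}

/-- The value of `f_k` on the vector, `(1, 0)` or `(n, n + 1)`, whose multiples are counted by
`d_{k,l}`, as a natural number (for `k ≤ n`). -/
def blockWeight (n k l : ℕ) : ℕ := if (zk n k = true) ↔ Odd l then k else n + 1 - k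

theorem blockWeight_pos (hk1 : 1 ≤ k) (hkn : k ≤ n) (l : ℕ) : 0 < blockWeight n k l := by
  unfold blockWeight
  split_ifs <;> omega

theorem blockWeight_succ (n k l : ℕ) :
    blockWeight n k (l + 1) = if (zk n k = true) ↔ Odd l then n + 1 - k else k := by
  by_cases hz : zk n k = true <;> by_cases hl : Odd l <;>
    simp [blockWeight, hz, hl, Nat.odd_add_one]

theorem blockWeight_add_two (n k l : ℕ) : blockWeight n k (l + 2) = blockWeight n k l := by
  simp only [blockWeight, Nat.odd_add_one, not_not]

theorem blockWeight_zero_add_one (hkn : k ≤ n) :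
    blockWeight n k 0 + blockWeight n k 1 = n + 1 := by
  rw [blockWeight_succ, blockWeight]
  split_ifs <;> omega

theorem fk_mk_zero (k a : ℕ) : fk k (a, 0) = (a * k : ℕ) := by
  simp [fk, mul_comm]

theorem fk_mul_self_mul_succ (hkn : k ≤ n) (a : ℕ) :
    fk k (a * n, a * (n + 1)) = (a * (n + 1 - k) : ℕ) := by
  rw [fk]
  push_cast [Nat.le_succ_of_le hkn]
  ring

theorem fk_one_zero (k : ℕ) : fk k (1, 0) = k := by simpa using fk_mk_zero k 1

theorem fk_self_succ (hkn : k ≤ n) : fk k (n, n + 1) = (n + 1 - k : ℕ) := by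
  simpa using fk_mul_self_mul_succ hkn 1

theorem blockWeight_one_le_blockWeight_zero (hkn : k ≤ n) :
    blockWeight n k 1 ≤ blockWeight n k 0 := by
  have hz : zk n k = true ↔ k ≤ n + 1 - k := by
    rw [zk, decide_eq_true_iff, fk_one_zero, fk_self_succ hkn, Nat.cast_le]
  rw [blockWeight_succ, blockWeight]
  split_ifs with h <;> simp only [Nat.not_odd_zero, iff_false, not_not, hz] at h <;> omega

theorem tval_eq_div (hk1 : 1 ≤ k) (hkn : k ≤ n) (l O E : ℕ) :
    tval n k l O E =
      ((if Odd l then E else O) + 1) * blockWeight n k (l + 1) / blockWeight n k l := by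
  have hpos := blockWeight_pos hk1 hkn l
  rw [blockWeight_succ]
  unfold tval blockWeight at *
  split_ifs at hpos ⊢ <;>
    simp only [fk_self_succ hkn, fk_mk_zero, fk_mul_self_mul_succ hkn, one_mul,
      sSup_setOf_natCast_mul_le hpos]

theorem oeSums_eq_paritySum (n k m : ℕ) :
    oeSums n k m = (paritySum (dk n k) 1 (m + 1), paritySum (dk n k) 0 (m + 1)) := by
  induction m with
  | zero => simp [oeSums, paritySum, dk]
  | succ m ih =>
    have hrec : oeSums n k (m + 1) =
        if Odd (m + 1) then ((oeSums n k m).1 + dk n k (m + 1), (oeSums n k m).2)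
        else ((oeSums n k m).1, (oeSums n k m).2 + dk n k (m + 1)) := rfl
    rw [hrec, ih, paritySum_succ _ 1 (m + 1), paritySum_succ _ 0 (m + 1)]
    by_cases hm : Odd (m + 1) <;> simp [hm]

theorem dk_succ (hk1 : 1 ≤ k) (hkn : k ≤ n) {l : ℕ} (hl : ∑ i ∈ range (l + 1), dk n k i < n) :
    dk n k (l + 1) = min (n - ∑ i ∈ range (l + 1), dk n k i)
      ((paritySum (dk n k) l (l + 1) + 1) * blockWeight n k l / blockWeight n k (l + 1) -
        paritySum (dk n k) (l + 1) (l + 1)) := by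
  have hsum : (oeSums n k l).1 + (oeSums n k l).2 = ∑ i ∈ range (l + 1), dk n k i := by
    rw [oeSums_eq_paritySum, add_comm, paritySum_add_paritySum_succ]
  have hself : (if Odd (l + 1) then (oeSums n k l).1 else (oeSums n k l).2) =
      paritySum (dk n k) (l + 1) (l + 1) := by
    by_cases h : Odd (l + 1) <;> simp [oeSums_eq_paritySum, paritySum, h]
  have hother : (if Odd (l + 1) then (oeSums n k l).2 else (oeSums n k l).1) =
      paritySum (dk n k) l (l + 1) := by
    by_cases h : Odd l <;> simp [oeSums_eq_paritySum, paritySum, h, Nat.odd_add_one]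
  rw [dk, hsum, if_pos hl, tval_eq_div hk1 hkn, hself, hother, blockWeight_add_two]

theorem isGreedyMerge_dk (hk1 : 1 ≤ k) (hkn : k ≤ n) :
    IsGreedyMerge n (blockWeight n k) (dk n k) where
  weight_pos := blockWeight_pos hk1 hkn
  weight_add_two := blockWeight_add_two n k
  weight_one_le_weight_zero := blockWeight_one_le_blockWeight_zero hkn
  block_zero := rfl
  block_succ _ := dk_succ hk1 hkn

end Etak

theorem stmt4 (n : ℕ) (hn : 1 ≤ n) (k : ℕ) (hk1 : 1 ≤ k) (hkn : k ≤ n) :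
    vvec (etak n k) n = (0, k) ∨ vvec (etak n k) n = (n - k + 1, 0) := by
  have hmerge : IsGreedyMerge n (blockWeight n k) (etak n k).d := isGreedyMerge_dk hk1 hkn
  obtain ⟨l, hl⟩ := hmerge.exists_vvec_eq (blockWeight_zero_add_one hkn)
  have hz : (etak n k).z = zk n k := rfl
  rw [hl, hz, ← blockWeight_add_two, blockWeight_succ]
  split_ifs
  · exact Or.inr (by rw [Nat.sub_add_comm hkn])
  · exact Or.inl rfl
end
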